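/- Let n ≥ 2. For every configuration of n regions on ℝ with density |x| there exists a condensed configuration of n regions with the same list of weighted masses, consisting of at most 2n − 2 intervals, whose total weighted perimeter is at most that of the original configuration. (Consequently, an isoperimetric n-bubble is in condensed form and has at most 2n − 2 adjacent intervals.) -/

import Mathlib

open MeasureTheory Finset

/-- A configuration of `n` regions made of `k` nondegenerate closed intervals
with pairwise disjoint interiors, each interval labeled by one of the regions. -/
structure Config (n k : ℕ) where
  lo : Fin k → ℝ
  hi : Fin k → ℝ
  lab : Fin k → Fin n
  nondeg : ∀ j, lo j < hi j
  disj : ∀ i j, i ≠ j → Set.Ioo (lo i) (hi i) ∩ Set.Ioo (lo j) (hi j) = ∅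

namespace Config

variable {n k : ℕ}

/-- Weighted mass of region `i` with respect to the density `|x|`. -/
noncomputable def mass (C : Config n k) (i : Fin n) : ℝ :=
  ∑ j ∈ univ.filter (fun j => C.lab j = i), ∫ x in C.lo j..C.hi j, |x|

/-- The (finite) set of all endpoints of intervals of the configuration. -/
noncomputable def endpointSet (C : Config n k) : Finset ℝ :=
  image C.lo univ ∪ image C.hi univ

/-- Total weighted perimeter with respect to the density `|x|`. -/
noncomputable def perim (C : Config n k) : ℝ :=
  ∑ x ∈ C.endpointSet, |x|

/-- A configuration is condensed if the union of its intervals is a closed interval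
containing `0` and each region has at most one interval contained in `(-∞,0]`
and at most one interval contained in `[0,∞)`. -/
def Condensed (C : Config n k) : Prop :=
  (∃ a b : ℝ, a ≤ 0 ∧ 0 ≤ b ∧ (⋃ j, Set.Icc (C.lo j) (C.hi j)) = Set.Icc a b) ∧
  ∀ i : Fin n,
    (univ.filter (fun j => C.lab j = i ∧ C.hi j ≤ 0)).card ≤ 1 ∧
    (univ.filter (fun j => C.lab j = i ∧ 0 ≤ C.lo j)).card ≤ 1

/-- A configuration is isoperimetric if its total weighted perimeter is least among all
configurations of `n` regions with the same list of weighted masses. -/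
def Isoperimetric (C : Config n k) : Prop :=
  ∀ (k' : ℕ) (C' : Config n k'), (∀ i, C'.mass i = C.mass i) → C.perim ≤ C'.perim

end Config

/-!
Keep, on each side of the origin, only the mass that every region has there and the outermost
endpoint of that region. Restacking these masses outwards from the origin, in the order of the
outermost endpoints, moves no outermost endpoint outwards, so the perimeter does not increase.

The interval from the origin of weighted mass `s` ends at distance `√(2 * s)`, so with the two
orders fixed the perimeter of the stacks is a concave function of the way in which the regions
divide their masses between the two sides. Such a function is at most as large at some vertex of
the box of all divisions, where every region lies on one side only. Then each region is a single
interval, and `n ≤ 2 * n - 2`.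
-/

/-- The signed weighted mass `∫ t in 0..x, |t|` of the interval between `0` and `x`. -/
noncomputable def signedMass (x : ℝ) : ℝ := x * |x| / 2

lemma signedMass_of_nonneg {x : ℝ} (hx : 0 ≤ x) : signedMass x = x ^ 2 / 2 := by
  rw [signedMass, abs_of_nonneg hx, sq]

@[simp]
lemma signedMass_zero : signedMass 0 = 0 := by simp [signedMass]

@[simp]
lemma signedMass_neg (x : ℝ) : signedMass (-x) = -signedMass x := by
  rw [signedMass, signedMass, abs_neg]
  ring

lemma integral_zero_abs (x : ℝ) : ∫ t in (0 : ℝ)..x, |t| = signedMass x := by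
  rcases le_total 0 x with hx | hx
  · have habs : Set.EqOn (fun t : ℝ => |t|) id (Set.uIcc 0 x) := fun t ht =>
      abs_of_nonneg (Set.uIcc_of_le hx ▸ ht).1
    rw [intervalIntegral.integral_congr habs, signedMass_of_nonneg hx]
    simp
  · have habs : Set.EqOn (fun t : ℝ => |t|) Neg.neg (Set.uIcc 0 x) := fun t ht =>
      abs_of_nonpos (Set.uIcc_of_ge hx ▸ ht).2
    rw [intervalIntegral.integral_congr habs, signedMass, abs_of_nonpos hx,
      intervalIntegral.integral_neg, integral_id]
    ring

lemma integral_abs (a b : ℝ) : ∫ t in a..b, |t| = signedMass b - signedMass a := by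
  rw [← integral_zero_abs, ← integral_zero_abs, intervalIntegral.integral_interval_sub_left]
  all_goals exact continuous_abs.intervalIntegrable _ _

lemma strictMono_signedMass : StrictMono signedMass := by
  refine strictMono_of_odd_strictMonoOn_nonneg signedMass_neg fun x hx y hy hxy => ?_
  rw [signedMass_of_nonneg hx, signedMass_of_nonneg hy]
  have : 0 ≤ x := hx
  gcongr

lemma surjective_signedMass : Function.Surjective signedMass := by
  have hsqrt : ∀ s : ℝ, 0 ≤ s → signedMass √(2 * s) = s := fun s hs => by
    rw [signedMass_of_nonneg (Real.sqrt_nonneg _), Real.sq_sqrt (by positivity)]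
    ring
  intro s
  rcases le_total 0 s with hs | hs
  · exact ⟨_, hsqrt s hs⟩
  · exact ⟨-√(2 * -s), by rw [signedMass_neg, hsqrt _ (neg_nonneg.2 hs), neg_neg]⟩

lemma abs_eq_sqrt_signedMass (x : ℝ) : |x| = √(2 * |signedMass x|) := by
  rw [signedMass, abs_div, abs_mul, abs_abs, abs_two, mul_div_cancel₀ _ two_ne_zero,
    Real.sqrt_mul_self (abs_nonneg x)]

lemma signedMass_eq_posPart_sub_negPart (x : ℝ) :
    signedMass x = signedMass x⁺ - signedMass x⁻ := by
  rcases le_total 0 x with hx | hx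
  · simp [posPart_of_nonneg hx, negPart_of_nonneg hx]
  · simp [posPart_of_nonpos hx, negPart_of_nonpos hx]

lemma monotone_signedMass_posPart : Monotone fun x : ℝ => signedMass x⁺ :=
  strictMono_signedMass.monotone.comp posPart_mono

/-- `signedMass` as a change of coordinate on the line, which turns weighted mass into length. -/
noncomputable def signedMassIso : ℝ ≃o ℝ :=
  strictMono_signedMass.orderIsoOfSurjective signedMass surjective_signedMass

@[simp]
lemma signedMass_signedMassIso_symm (s : ℝ) : signedMass (signedMassIso.symm s) = s :=
  signedMassIso.apply_symm_apply s

@[simp]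
lemma signedMassIso_symm_zero : signedMassIso.symm 0 = 0 :=
  signedMassIso.symm_apply_eq.2 signedMass_zero.symm

lemma abs_signedMassIso_symm (s : ℝ) : |signedMassIso.symm s| = √(2 * |s|) := by
  rw [abs_eq_sqrt_signedMass, signedMass_signedMassIso_symm]

lemma sum_comp_le_sum_of_injOn {κ ι : Type*} {s : Finset κ} {t : Finset ι} {f : κ → ι}
    {w : ι → ℝ} (hf : Set.InjOn f s) (hst : ∀ l ∈ s, f l ∈ t) (hw : ∀ i ∈ t, 0 ≤ w i) :
    ∑ l ∈ s, w (f l) ≤ ∑ i ∈ t, w i := by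
  classical
  rw [← sum_image hf]
  exact sum_le_sum_of_subset_of_nonneg (image_subset_iff.2 hst) fun i hi _ => hw i hi

section Stack

variable {ι κ α : Type*}

/-- The weighted perimeter of the configuration in which intervals of weighted masses `w` are
stacked on `[0, ∞)` from the origin outwards in the order given by `ρ`. The sum counts one outer
endpoint for each index, also for those of mass `0`. -/
noncomputable def stackPerim [Fintype ι] [LinearOrder α] (ρ : ι → α) (w : ι → ℝ) : ℝ :=
  ∑ i, √(2 * ∑ j with ρ j ≤ ρ i, w j)

lemma concaveOn_sum_comp_sum [Fintype κ] {φ : ℝ → ℝ} (hφ : ConcaveOn ℝ (Set.Ici 0) φ)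
    (S : κ → Finset ι) :
    ConcaveOn ℝ (Set.Ici 0) fun w : ι → ℝ => ∑ l, φ (∑ j ∈ S l, w j) := by
  refine ⟨convex_Ici 0, fun x hx y hy a b ha hb hab => ?_⟩
  simp only [smul_eq_mul, mul_sum, ← sum_add_distrib, Pi.add_apply, Pi.smul_apply]
  refine sum_le_sum fun l _ => ?_
  have hφl := hφ.2 (x := ∑ j ∈ S l, x j) (y := ∑ j ∈ S l, y j)
    (sum_nonneg fun j _ => hx j) (sum_nonneg fun j _ => hy j) ha hb hab
  simpa only [smul_eq_mul, mul_sum, ← sum_add_distrib] using hφl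

lemma concaveOn_stackPerim [Fintype ι] [LinearOrder α] (ρ : ι → α) :
    ConcaveOn ℝ (Set.Ici 0) (stackPerim ρ) := by
  refine concaveOn_sum_comp_sum (φ := fun s => √(2 * s)) ?_ fun i => univ.filter (ρ · ≤ ρ i)
  exact (Real.strictConcaveOn_sqrt.concaveOn.comp_linearMap (LinearMap.mulLeft ℝ 2)).subset
    (fun s (hs : 0 ≤ s) => show 0 ≤ 2 * s by positivity) (convex_Ici 0)

end Stack

lemma exists_disjoint_add_le_of_concaveOn {ι : Type*} [Finite ι] {F G : (ι → ℝ) → ℝ}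
    (hF : ConcaveOn ℝ (Set.Ici 0) F) (hG : ConcaveOn ℝ (Set.Ici 0) G) {a b : ι → ℝ}
    (ha : 0 ≤ a) (hb : 0 ≤ b) :
    ∃ v u : ι → ℝ, 0 ≤ v ∧ 0 ≤ u ∧ (∀ i, v i = 0 ∨ u i = 0) ∧ v + u = a + b ∧
      F v + G u ≤ F a + G b := by
  have hconc : ConcaveOn ℝ (Set.Icc 0 (a + b)) fun w => F w + G (a + b - w) :=
    (hF.subset (fun _ hw => hw.1) (convex_Icc _ _)).add
      ((hG.comp_affineMap (AffineMap.const ℝ _ (a + b) - AffineMap.id ℝ _)).subset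
        (fun _ hw => sub_nonneg.2 hw.2) (convex_Icc _ _))
  have hmem : a ∈ convexHull ℝ (Set.univ.pi fun i => {0, a i + b i}) := by
    rw [convexHull_pi]
    intro i _
    beta_reduce
    rw [convexHull_pair, segment_eq_Icc (add_nonneg (ha i) (hb i))]
    exact ⟨ha i, le_add_of_nonneg_right (hb i)⟩
  have hvertices : (Set.univ.pi fun i => {0, a i + b i}) ⊆ Set.Icc 0 (a + b) := by
    rw [← Set.pi_univ_Icc]
    refine Set.pi_mono fun i _ => Set.pair_subset ?_ ?_
    · exact Set.left_mem_Icc.2 (add_nonneg (ha i) (hb i))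
    · exact Set.right_mem_Icc.2 (add_nonneg (ha i) (hb i))
  obtain ⟨v, hv, hle⟩ := hconc.exists_le_of_mem_convexHull hvertices hmem
  refine ⟨v, a + b - v, (hvertices hv).1, sub_nonneg.2 (hvertices hv).2, fun i => ?_,
    add_sub_cancel _ _, by simpa using hle⟩
  exact (hv i trivial).imp_right fun hvi => sub_eq_zero.2 (Eq.symm hvi)

lemma exists_injective_monotone_comp {ι β : Type*} [LinearOrder β] (T : Finset ι) (κ : ι → β) :
    ∃ f : Fin #T → ι, f.Injective ∧ Set.range f = T ∧ Monotone (κ ∘ f) := by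
  let e : Fin #T ≃ T := T.equivFin.symm
  let s := Tuple.sort fun l => κ (e l)
  refine ⟨fun l => e (s l), Subtype.val_injective.comp (e.injective.comp s.injective), ?_,
    Tuple.monotone_sort fun l => κ (e l)⟩
  change Set.range (Subtype.val ∘ (s.trans e)) = T
  rw [(s.trans e).surjective.range_comp, Subtype.range_coe]

lemma exists_injective_antitone_monotone {ι α β : Type*} [LinearOrder α] [LinearOrder β]
    (T : Finset ι) (p : ι → Prop) (σ : ι → α) (τ : ι → β) :
    ∃ (f : Fin #T → ι) (c : Fin (#T + 1)), f.Injective ∧ Set.range f = T ∧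
      (∀ l, l.castSucc < c ↔ p (f l)) ∧
      (∀ l l', l ≤ l' → p (f l') → σ (f l') ≤ σ (f l)) ∧
      (∀ l l', l ≤ l' → ¬ p (f l) → τ (f l) ≤ τ (f l')) := by
  classical
  let κ : ι → αᵒᵈ ⊕ₗ β := fun i => if p i then Sum.inlₗ (.toDual (σ i)) else Sum.inrₗ (τ i)
  obtain ⟨f, hf, hrange, hmono⟩ := exists_injective_monotone_comp T κ
  have hκ : ∀ ⦃l l'⦄, l ≤ l' → κ (f l) ≤ κ (f l') := hmono
  have hp : ∀ ⦃l l'⦄, l ≤ l' → p (f l') → p (f l) := fun l l' hl hpl' => by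
    by_contra hpl
    simpa [κ, hpl, hpl'] using hκ hl
  refine ⟨f, ⟨#{l | p (f l)}, Nat.lt_succ_of_le (card_finset_fin_le _)⟩, hf, hrange,
    fun _ => Fin.lt_card_filter_univ_iff_apply_of_imp (p ∘ f) fun _ _ hl => hp hl,
    fun l l' hl hpl' => ?_, fun l l' hl hpl => ?_⟩
  · simpa [κ, hpl', hp hl hpl'] using hκ hl
  · simpa [κ, hpl, mt (hp hl) hpl] using hκ hl

section PartialSum

variable {M : Type*} {k : ℕ}

lemma partialSum_eq_sum [AddCommMonoid M] (x : Fin k → M) (j : Fin (k + 1)) :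
    Fin.partialSum x j = ∑ l with l.castSucc < j, x l :=
  List.sum_take_ofFn x j

lemma partialSum_sub_partialSum [AddCommGroup M] (x : Fin k → M) {a b : Fin (k + 1)}
    (hab : a ≤ b) :
    Fin.partialSum x b - Fin.partialSum x a =
      ∑ l with a ≤ l.castSucc ∧ l.castSucc < b, x l := by
  rw [partialSum_eq_sum, partialSum_eq_sum, sub_eq_iff_eq_add',
    ← sum_filter_add_sum_filter_not (univ.filter (Fin.castSucc · < b)) (Fin.castSucc · < a),
    filter_filter, filter_filter]
  congr 2 <;> ext l <;> grind

lemma strictMono_partialSum [AddCommMonoid M] [PartialOrder M] [IsOrderedCancelAddMonoid M]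
    {x : Fin k → M} (hx : ∀ l, 0 < x l) : StrictMono (Fin.partialSum x) :=
  Fin.strictMono_iff_lt_succ.2 fun l => by
    rw [Fin.partialSum_succ]
    exact lt_add_of_pos_right _ (hx l)

lemma abs_partialSum_succAbove_sub [AddCommGroup M] [LinearOrder M] [IsOrderedAddMonoid M]
    {x : Fin k → M} (hx : ∀ l, 0 ≤ x l) (c : Fin (k + 1)) (l : Fin k) :
    |Fin.partialSum x (c.succAbove l) - Fin.partialSum x c| =
      if l.castSucc < c then ∑ l' with l ≤ l' ∧ l'.castSucc < c, x l'
      else ∑ l' with l' ≤ l ∧ ¬ l'.castSucc < c, x l' := by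
  split_ifs with hl
  · rw [Fin.succAbove_of_castSucc_lt c l hl, abs_sub_comm, partialSum_sub_partialSum x hl.le]
    simp only [Fin.castSucc_le_castSucc_iff]
    exact abs_of_nonneg (sum_nonneg fun l' _ => hx l')
  · rw [not_lt] at hl
    rw [Fin.succAbove_of_le_castSucc c l hl,
      partialSum_sub_partialSum x (hl.trans Fin.castSucc_lt_succ.le)]
    simp only [Fin.castSucc_lt_succ_iff, not_lt, and_comm]
    exact abs_of_nonneg (sum_nonneg fun l' _ => hx l')

end PartialSum

lemma Ioo_inter_Ioo_eq_empty {α : Type*} [LinearOrder α] {a b c d : α} (h : b ≤ c ∨ d ≤ a) :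
    Set.Ioo a b ∩ Set.Ioo c d = ∅ := by
  rw [Set.Ioo_inter_Ioo]
  refine Set.Ioo_eq_empty (not_lt.2 ?_)
  rcases h with h | h
  · exact (min_le_left _ _).trans (h.trans (le_max_right _ _))
  · exact (min_le_right _ _).trans (h.trans (le_max_left _ _))

lemma iUnion_Icc_castSucc_succ {α : Type*} [LinearOrder α] {k : ℕ} [NeZero k]
    {p : Fin (k + 1) → α} (hp : Monotone p) :
    ⋃ j : Fin k, Set.Icc (p j.castSucc) (p j.succ) = Set.Icc (p 0) (p (Fin.last k)) := by
  refine Set.Subset.antisymm (Set.iUnion_subset fun j =>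
    Set.Icc_subset_Icc (hp (Fin.zero_le _)) (hp (Fin.le_last _))) ?_
  obtain ⟨k, rfl⟩ := Nat.exists_eq_succ_of_ne_zero (NeZero.ne k)
  clear hp
  induction k with
  | zero => exact Set.subset_iUnion (fun j : Fin 1 => Set.Icc (p j.castSucc) (p j.succ)) 0
  | succ k ih =>
    refine Set.Icc_subset_Icc_union_Icc (b := p (Fin.last (k + 1)).castSucc) |>.trans
      (Set.union_subset ((ih (p := p ∘ Fin.castSucc)).trans ?_) ?_)
    · exact Set.iUnion_subset fun j =>
        Set.subset_iUnion (fun j : Fin (k + 2) => Set.Icc (p j.castSucc) (p j.succ)) j.castSucc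
    · exact Set.subset_iUnion (fun j : Fin (k + 2) => Set.Icc (p j.castSucc) (p j.succ))
        (Fin.last (k + 1))

namespace Config

variable {n k : ℕ}

section RightHalf

variable (C : Config n k)

lemma hi_le_lo_or {i j : Fin k} (hij : i ≠ j) : C.hi i ≤ C.lo j ∨ C.hi j ≤ C.lo i := by
  have hdisj := C.disj i j hij
  have hi := C.nondeg i
  have hj := C.nondeg j
  rw [Set.Ioo_inter_Ioo, Set.Ioo_eq_empty_iff] at hdisj
  grind

lemma hi_injective : Function.Injective C.hi := fun i j h => by
  by_contra hij
  have hi := C.nondeg i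
  have hj := C.nondeg j
  rcases C.hi_le_lo_or hij with h' | h' <;> linarith

lemma sum_sub_le_of_monotone {φ : ℝ → ℝ} (hφ : Monotone φ) (hφ0 : ∀ x, 0 ≤ φ x)
    (s : Finset (Fin k)) {t : ℝ} (ht : ∀ j ∈ s, C.hi j ≤ t) :
    ∑ j ∈ s, (φ (C.hi j) - φ (C.lo j)) ≤ φ t := by
  induction s using Finset.induction_on_max_value C.hi generalizing t with
  | empty => simpa using hφ0 t
  | insert a s ha hmax ih =>
    have hlo : ∀ j ∈ s, C.hi j ≤ C.lo a := fun j hj =>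
      (C.hi_le_lo_or (ne_of_mem_of_not_mem hj ha)).resolve_right fun h =>
        ((C.nondeg j).trans_le (hmax j hj)).not_ge h
    rw [sum_insert ha]
    linarith [ih hlo, hφ (ht a (mem_insert_self a s))]

/-- The part of the mass of region `i` lying in `[0, ∞)`. -/
noncomputable def rightMass (i : Fin n) : ℝ :=
  ∑ j with C.lab j = i, (signedMass (C.hi j)⁺ - signedMass (C.lo j)⁺)

/-- The largest right endpoint of region `i`, or `0` if this is negative or `i` is empty. -/
noncomputable def rightEnd (i : Fin n) : ℝ :=
  (insert 0 (image C.hi (univ.filter fun j => C.lab j = i))).max' (insert_nonempty _ _)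

/-- The part of the perimeter contributed by the endpoints in `[0, ∞)`. -/
noncomputable def rightPerim : ℝ :=
  ∑ x ∈ C.endpointSet, x⁺

lemma rightMass_nonneg : 0 ≤ C.rightMass := fun _ =>
  sum_nonneg fun j _ => sub_nonneg.2 (monotone_signedMass_posPart (C.nondeg j).le)

lemma rightEnd_nonneg (i : Fin n) : 0 ≤ C.rightEnd i :=
  le_max' _ _ (mem_insert_self _ _)

lemma hi_le_rightEnd (j : Fin k) : C.hi j ≤ C.rightEnd (C.lab j) :=
  le_max' _ _ (mem_insert_of_mem (mem_image_of_mem _ (by simp)))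

lemma exists_hi_eq_rightEnd {i : Fin n} (hi : C.rightEnd i ≠ 0) :
    ∃ j, C.lab j = i ∧ C.hi j = C.rightEnd i := by
  have hmem : C.rightEnd i ∈ insert 0 (image C.hi (univ.filter fun j => C.lab j = i)) :=
    max'_mem _ _
  simpa using (mem_insert.1 hmem).resolve_left hi

lemma sum_rightMass_le (s : Finset (Fin n)) {t : ℝ} (hs : ∀ i ∈ s, C.rightEnd i ≤ t) :
    ∑ i ∈ s, C.rightMass i ≤ signedMass t⁺ := by
  have hfiber : ∑ i ∈ s, C.rightMass i =
      ∑ j with C.lab j ∈ s, (signedMass (C.hi j)⁺ - signedMass (C.lo j)⁺) := by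
    simp only [rightMass, sum_filter]
    rw [sum_comm]
    simp
  rw [hfiber]
  refine C.sum_sub_le_of_monotone monotone_signedMass_posPart (fun x => ?_) _ fun j hj =>
    (C.hi_le_rightEnd j).trans (hs _ (mem_filter.1 hj).2)
  simpa using strictMono_signedMass.monotone (posPart_nonneg x)

lemma sum_rightEnd_le_rightPerim : ∑ i, C.rightEnd i ≤ C.rightPerim := by
  have hinj : Set.InjOn C.rightEnd (univ.filter fun i => C.rightEnd i ≠ 0) := by
    intro i hi i' hi' h
    obtain ⟨j, rfl, hj⟩ := C.exists_hi_eq_rightEnd (mem_filter.1 hi).2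
    obtain ⟨j', rfl, hj'⟩ := C.exists_hi_eq_rightEnd (mem_filter.1 hi').2
    rw [C.hi_injective (hj.trans (h.trans hj'.symm))]
  calc ∑ i, C.rightEnd i = ∑ i with C.rightEnd i ≠ 0, (C.rightEnd i)⁺ := by
        simp only [posPart_of_nonneg (C.rightEnd_nonneg _), sum_filter_ne_zero]
    _ ≤ C.rightPerim := sum_comp_le_sum_of_injOn hinj (fun i hi => ?_) fun x _ => posPart_nonneg x
  obtain ⟨j, -, hj⟩ := C.exists_hi_eq_rightEnd (mem_filter.1 hi).2
  exact mem_union_right _ (hj ▸ mem_image_of_mem _ (mem_univ j))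

lemma stackPerim_le_rightPerim : stackPerim C.rightEnd C.rightMass ≤ C.rightPerim := by
  refine (sum_le_sum fun i _ => ?_).trans C.sum_rightEnd_le_rightPerim
  have hmass := C.sum_rightMass_le (univ.filter (C.rightEnd · ≤ C.rightEnd i)) (t := C.rightEnd i)
    fun j hj => (mem_filter.1 hj).2
  rw [posPart_of_nonneg (C.rightEnd_nonneg i), signedMass_of_nonneg (C.rightEnd_nonneg i)] at hmass
  exact Real.sqrt_le_iff.2 ⟨C.rightEnd_nonneg i, by linarith⟩

/-- The mirror image of a configuration in the origin, which turns the part of a configuration in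
`(-∞, 0]` into one in `[0, ∞)`. -/
noncomputable def reflect : Config n k where
  lo j := -C.hi j
  hi j := -C.lo j
  lab := C.lab
  nondeg j := neg_lt_neg (C.nondeg j)
  disj _ _ hij := Ioo_inter_Ioo_eq_empty ((C.hi_le_lo_or hij).symm.imp neg_le_neg neg_le_neg)

lemma mass_eq_rightMass_add (i : Fin n) :
    C.mass i = C.reflect.rightMass i + C.rightMass i := by
  refine Eq.trans (sum_congr rfl fun j _ => ?_) sum_add_distrib
  rw [integral_abs, signedMass_eq_posPart_sub_negPart, signedMass_eq_posPart_sub_negPart (C.lo j)]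
  simp only [reflect, posPart_neg]
  ring

lemma perim_eq_rightPerim_add : C.perim = C.reflect.rightPerim + C.rightPerim := by
  have hreflect : C.reflect.endpointSet = C.endpointSet.image Neg.neg := by
    rw [endpointSet, endpointSet, image_union, image_image, image_image, union_comm]
    rfl
  rw [rightPerim, rightPerim, hreflect, sum_image neg_injective.injOn, ← sum_add_distrib]
  simp only [posPart_neg, perim, add_comm _⁻, posPart_add_negPart]

lemma mass_lab_pos (j : Fin k) : 0 < C.mass (C.lab j) := by
  have hpos : ∀ l, 0 < ∫ x in C.lo l..C.hi l, |x| := fun l => by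
    rw [integral_abs]
    exact sub_pos.2 (strictMono_signedMass (C.nondeg l))
  exact sum_pos (fun l _ => hpos l) ⟨j, by simp⟩

end RightHalf

/-- The configuration of the intervals between consecutive points of a strictly increasing finite
sequence. -/
def ofStrictMono (p : Fin (k + 1) → ℝ) (hp : StrictMono p) (f : Fin k → Fin n) : Config n k where
  lo j := p j.castSucc
  hi j := p j.succ
  lab := f
  nondeg _ := hp Fin.castSucc_lt_succ
  disj _ _ hij := Ioo_inter_Ioo_eq_empty <| (lt_or_gt_of_ne hij).imp
    (fun h => hp.monotone (Fin.succ_le_castSucc_iff.2 h))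
    (fun h => hp.monotone (Fin.succ_le_castSucc_iff.2 h))

section OfStrictMono

variable {p : Fin (k + 1) → ℝ} (hp : StrictMono p) {f : Fin k → Fin n}

lemma condensed_ofStrictMono [NeZero k] (hf : f.Injective) (h0 : p 0 ≤ 0)
    (hlast : 0 ≤ p (Fin.last k)) : (ofStrictMono p hp f).Condensed := by
  refine ⟨⟨_, _, h0, hlast, iUnion_Icc_castSucc_succ hp.monotone⟩, fun i => ⟨?_, ?_⟩⟩ <;>
    exact card_le_one.2 fun a ha b hb =>
      hf ((mem_filter.1 ha).2.1.trans (mem_filter.1 hb).2.1.symm)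

lemma perim_ofStrictMono_le : (ofStrictMono p hp f).perim ≤ ∑ j, |p j| := by
  rw [perim, ← sum_image (f := fun x => |x|) hp.injective.injOn]
  refine sum_le_sum_of_subset_of_nonneg (fun x hx => ?_) fun _ _ _ => abs_nonneg _
  rcases mem_union.1 hx with hx | hx <;> obtain ⟨j, -, rfl⟩ := mem_image.1 hx <;>
    exact mem_image_of_mem p (mem_univ _)

lemma perim_ofStrictMono_le_of_eq_zero {c : Fin (k + 1)} (hc : p c = 0) :
    (ofStrictMono p hp f).perim ≤ ∑ l, |p (c.succAbove l)| := by
  simpa [Fin.sum_univ_succAbove _ c, hc] using perim_ofStrictMono_le (f := f) hp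

end OfStrictMono

section Layout

variable {x : Fin k → ℝ} (hx : ∀ l, 0 < x l) (c : Fin (k + 1)) {f : Fin k → Fin n}

/-- Consecutive intervals of weighted masses `x`, placed so that the endpoint number `c` is the
origin. -/
noncomputable def layout (f : Fin k → Fin n) : Config n k :=
  ofStrictMono (fun j => signedMassIso.symm (Fin.partialSum x j - Fin.partialSum x c))
    (signedMassIso.symm.strictMono.comp fun _ _ h =>
      sub_lt_sub_right (strictMono_partialSum hx h) _) f

lemma mass_layout (i : Fin n) : (layout hx c f).mass i = ∑ l with f l = i, x l :=
  sum_congr rfl fun l _ => by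
    simp [layout, ofStrictMono, integral_abs, Fin.partialSum_succ]

lemma condensed_layout [NeZero k] (hf : f.Injective) : (layout hx c f).Condensed := by
  have hmono := (strictMono_partialSum hx).monotone
  refine condensed_ofStrictMono _ hf ?_ ?_
  · rw [← signedMassIso_symm_zero]
    exact signedMassIso.symm.monotone (sub_nonpos.2 (hmono (Fin.zero_le c)))
  · rw [← signedMassIso_symm_zero]
    exact signedMassIso.symm.monotone (sub_nonneg.2 (hmono (Fin.le_last c)))

lemma perim_layout_le : (layout hx c f).perim ≤
    ∑ l, √(2 * |Fin.partialSum x (c.succAbove l) - Fin.partialSum x c|) := by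
  simpa only [layout, abs_signedMassIso_symm] using
    perim_ofStrictMono_le_of_eq_zero (f := f) (p := fun j => signedMassIso.symm _) _
      (c := c) (by simp)

end Layout

section LayoutStack

variable {α β : Type*} [LinearOrder α] [LinearOrder β] {v u : Fin n → ℝ}

lemma perim_layout_le_stackPerim_add (hv : 0 ≤ v) (hu : 0 ≤ u) {f : Fin k → Fin n}
    (hf : f.Injective) (hx : ∀ l, 0 < v (f l) + u (f l)) {c : Fin (k + 1)}
    {σ : Fin n → α} {τ : Fin n → β}
    (hleft : ∀ l, l.castSucc < c → u (f l) = 0) (hright : ∀ l, ¬ l.castSucc < c → v (f l) = 0)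
    (hσ : ∀ l l', l ≤ l' → l'.castSucc < c → σ (f l') ≤ σ (f l))
    (hτ : ∀ l l', l ≤ l' → ¬ l.castSucc < c → τ (f l) ≤ τ (f l')) :
    (layout hx c f).perim ≤ stackPerim σ v + stackPerim τ u := by
  have hterm : ∀ l, √(2 * |Fin.partialSum (fun l => v (f l) + u (f l)) (c.succAbove l) -
        Fin.partialSum (fun l => v (f l) + u (f l)) c|) ≤
      √(2 * ∑ j with σ j ≤ σ (f l), v j) + √(2 * ∑ j with τ j ≤ τ (f l), u j) := by
    intro l
    rw [abs_partialSum_succAbove_sub fun l' => (hx l').le]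
    split_ifs with hl
    · refine le_add_of_le_of_nonneg ?_ (Real.sqrt_nonneg _)
      gcongr
      calc ∑ l' with l ≤ l' ∧ l'.castSucc < c, (v (f l') + u (f l'))
          = ∑ l' with l ≤ l' ∧ l'.castSucc < c, v (f l') := sum_congr rfl fun l' hl' => by
            rw [hleft l' (mem_filter.1 hl').2.2, add_zero]
        _ ≤ ∑ j with σ j ≤ σ (f l), v j := sum_comp_le_sum_of_injOn hf.injOn
            (by simpa using hσ l) fun j _ => hv j
    · refine le_add_of_nonneg_of_le (Real.sqrt_nonneg _) ?_
      gcongr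
      calc ∑ l' with l' ≤ l ∧ ¬ l'.castSucc < c, (v (f l') + u (f l'))
          = ∑ l' with l' ≤ l ∧ ¬ l'.castSucc < c, u (f l') := sum_congr rfl fun l' hl' => by
            rw [hright l' (mem_filter.1 hl').2.2, zero_add]
        _ ≤ ∑ j with τ j ≤ τ (f l), u j := sum_comp_le_sum_of_injOn hf.injOn
            (by simpa using fun l' => hτ l' l) fun j _ => hu j
  refine (perim_layout_le hx c).trans ((sum_le_sum fun l _ => hterm l).trans ?_)
  rw [stackPerim, stackPerim, ← sum_add_distrib]
  exact sum_comp_le_sum_of_injOn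
    (w := fun i => √(2 * ∑ j with σ j ≤ σ i, v j) + √(2 * ∑ j with τ j ≤ τ i, u j))
    hf.injOn (fun _ _ => mem_univ _) fun i _ => by positivity

lemma exists_condensed_perim_le_stackPerim_add (hv : 0 ≤ v) (hu : 0 ≤ u)
    (hvu : ∀ i, v i = 0 ∨ u i = 0) (hpos : ∃ i, 0 < v i + u i) (σ : Fin n → α)
    (τ : Fin n → β) :
    ∃ (k : ℕ) (C : Config n k), C.lab.Injective ∧ C.Condensed ∧
      (∀ i, C.mass i = v i + u i) ∧ C.perim ≤ stackPerim σ v + stackPerim τ u := by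
  obtain ⟨f, c, hf, hrange, hc, hσ, hτ⟩ := exists_injective_antitone_monotone
    (univ.filter fun i => 0 < v i + u i) (fun i => 0 < v i) σ τ
  have hmem : ∀ i, i ∈ Set.range f ↔ 0 < v i + u i := by simp [hrange]
  have hx : ∀ l, 0 < v (f l) + u (f l) := fun l => (hmem _).1 ⟨l, rfl⟩
  obtain ⟨i₀, hi₀⟩ := hpos
  have : NeZero #{i | 0 < v i + u i} := ⟨card_ne_zero_of_mem (mem_filter.2 ⟨mem_univ _, hi₀⟩)⟩
  refine ⟨_, layout hx c f, hf, condensed_layout hx c hf, fun i => ?_,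
    perim_layout_le_stackPerim_add hv hu hf hx ?_ ?_ ?_ ?_⟩
  · rw [mass_layout]
    by_cases hi : i ∈ Set.range f
    · obtain ⟨l, rfl⟩ := hi
      simp [hf.eq_iff, filter_eq']
    · have hzero : v i + u i = 0 :=
        le_antisymm (not_lt.1 (mt (hmem i).2 hi)) (add_nonneg (hv i) (hu i))
      rw [hzero, filter_false_of_mem fun l _ h => hi ⟨l, h⟩, sum_empty]
  · exact fun l hl => (hvu _).resolve_left ((hc l).1 hl).ne'
  · exact fun l hl => le_antisymm (not_lt.1 (mt (hc l).2 hl)) (hv _)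
  · exact fun l l' hll' hl' => hσ l l' hll' ((hc l').1 hl')
  · exact fun l l' hll' hl => hτ l l' hll' (mt (hc l).2 hl)

end LayoutStack

end Config

theorem condense_to_two_n_sub_two_general (n k : ℕ) (hk : 0 < k) (C : Config n k) :
    ∃ (k' : ℕ) (C' : Config n k'), C'.lab.Injective ∧ C'.Condensed ∧
      (∀ i, C'.mass i = C.mass i) ∧ C'.perim ≤ C.perim := by
  obtain ⟨v, u, hv, hu, hvu, hadd, hle⟩ := exists_disjoint_add_le_of_concaveOn
    (concaveOn_stackPerim C.reflect.rightEnd) (concaveOn_stackPerim C.rightEnd)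
    C.reflect.rightMass_nonneg C.rightMass_nonneg
  have hmass : ∀ i, v i + u i = C.mass i := fun i =>
    (congrFun hadd i).trans (C.mass_eq_rightMass_add i).symm
  obtain ⟨k', C', hlab, hcond, hmass', hperim⟩ :=
    Config.exists_condensed_perim_le_stackPerim_add hv hu hvu
      ⟨_, hmass _ ▸ C.mass_lab_pos ⟨0, hk⟩⟩ C.reflect.rightEnd C.rightEnd
  refine ⟨k', C', hlab, hcond, fun i => (hmass' i).trans (hmass i), ?_⟩
  calc C'.perim ≤ stackPerim C.reflect.rightEnd v + stackPerim C.rightEnd u := hperim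
    _ ≤ stackPerim C.reflect.rightEnd C.reflect.rightMass +
        stackPerim C.rightEnd C.rightMass := hle
    _ ≤ C.reflect.rightPerim + C.rightPerim :=
      add_le_add C.reflect.stackPerim_le_rightPerim C.stackPerim_le_rightPerim
    _ = C.perim := C.perim_eq_rightPerim_add.symm

/-- For `n ≥ 2`, every (nonempty) configuration of `n` regions on `ℝ` with density
`|x|` can be replaced by a condensed configuration with the same list of weighted
masses, at most `2n − 2` intervals, and total weighted perimeter at most that of the
original. In particular an isoperimetric `n`-bubble is condensed with at most `2n − 2`
adjacent intervals. -/
theorem condense_to_two_n_sub_two (n k : ℕ) (hn : 2 ≤ n) (hk : 0 < k)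
    (C : Config n k) :
    ∃ (k' : ℕ) (C' : Config n k'),
      k' ≤ 2 * n - 2 ∧ C'.Condensed ∧
      (∀ i, C'.mass i = C.mass i) ∧
      C'.perim ≤ C.perim := by
  obtain ⟨k', C', hlab, hC'⟩ := condense_to_two_n_sub_two_general n k hk C
  have hk' : k' ≤ n := by simpa using Fintype.card_le_of_injective _ hlab
  exact ⟨k', C', by omega, hC'⟩
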